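/- Let M_∞, M_1 ⊂ R^d be disjoint, convex, compact sets, V symmetric positive-definite, and define the V-norm ‖θ‖_V = sqrt(θ^T V^{-2} θ). Let (μ̂_∞, μ̂_1) minimize ‖μ_∞ − μ_1‖_V over M_∞ × M_1. Then the pair of Gaussians (N(μ̂_∞,V), N(μ̂_1,V)) minimizes the Fisher divergence D_F(R_1‖R_∞) over all pairs (R_∞, R_1) in the convex hulls G_∞ × G_1 of {N(θ,V): θ ∈ M_∞} and {N(θ,V): θ ∈ M_1}, and the minimum value is ½‖μ̂_∞ − μ̂_1‖²_V. -/

import Mathlib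

open MeasureTheory Real
open scoped RealInnerProductSpace

/-- The score (gradient of the log-density) of a density `p` on `ℝ^d`. -/
noncomputable def score {d : ℕ} (p : EuclideanSpace ℝ (Fin d) → ℝ)
    (x : EuclideanSpace ℝ (Fin d)) : EuclideanSpace ℝ (Fin d) :=
  gradient (fun y => Real.log (p y)) x

/-- Fisher divergence `D_F(P‖Q) = E_{X∼P}[½‖∇log p(X) − ∇log q(X)‖²]` for densities `p, q`. -/
noncomputable def fisherDiv {d : ℕ} (p q : EuclideanSpace ℝ (Fin d) → ℝ) : ℝ :=
  ∫ x, (1 / 2) * ‖score p x - score q x‖ ^ 2 * p x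

/-- Density of the Gaussian `N(μ, V)` on `ℝ^d`, where `V` is the covariance operator. -/
noncomputable def gaussDensity {d : ℕ}
    (V : EuclideanSpace ℝ (Fin d) ≃L[ℝ] EuclideanSpace ℝ (Fin d))
    (μ x : EuclideanSpace ℝ (Fin d)) : ℝ :=
  (Real.sqrt ((2 * π) ^ d *
      LinearMap.det ((V : EuclideanSpace ℝ (Fin d) →L[ℝ] EuclideanSpace ℝ (Fin d)) :
        EuclideanSpace ℝ (Fin d) →ₗ[ℝ] EuclideanSpace ℝ (Fin d))))⁻¹ *
    Real.exp (-(1 / 2) * ⟪x - μ, V.symm (x - μ)⟫)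

/-- The `V`-norm `‖θ‖_V = sqrt (θᵀ V⁻² θ)`. -/
noncomputable def vnorm {d : ℕ}
    (V : EuclideanSpace ℝ (Fin d) ≃L[ℝ] EuclideanSpace ℝ (Fin d))
    (θ : EuclideanSpace ℝ (Fin d)) : ℝ :=
  Real.sqrt ⟪θ, V.symm (V.symm θ)⟫

/-!
The score at `x` of a mixture of the Gaussians `N(θ, V)` is `V⁻¹ (m(x) - x)`, where the posterior
mean `m(x)` is a convex combination of the component means. For two mixtures over `M_∞` and `M_1`
the terms `V⁻¹ x` cancel, so the scores differ in norm by `‖m_∞(x) - m_1(x)‖_V`, which is at least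
the distance `‖μ̂_∞ - μ̂_1‖_V` of the two sets at every `x`, and equal to it for the optimal pair
of Gaussians.

A point of a convex hull is a finite mixture, so the posterior means stay in the hull of finitely
many points. This bounds the score difference and makes the Fisher integrand integrable, so that
the integral is not the junk value `0`.
-/

section InnerProductSpace

variable {E : Type*} [NormedAddCommGroup E] [InnerProductSpace ℝ E]

lemma isPositive_of_inner_map_pos {T : E →ₗ[ℝ] E} (hT : T.IsSymmetric)
    (hpos : ∀ x, x ≠ 0 → 0 < ⟪x, T x⟫) : T.IsPositive := by
  refine ⟨hT, fun x => ?_⟩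
  rcases eq_or_ne x 0 with rfl | hx
  · simp
  · simpa only [real_inner_comm, RCLike.re_to_real] using (hpos x hx).le

lemma hasGradientAt_finset_sum [CompleteSpace E] {ι : Type*} {s : Finset ι} {f : ι → E → ℝ}
    {f' : ι → E} {x : E} (hf : ∀ i ∈ s, HasGradientAt (f i) (f' i) x) :
    HasGradientAt (fun y => ∑ i ∈ s, f i y) (∑ i ∈ s, f' i) x := by
  rw [hasGradientAt_iff_hasFDerivAt, map_sum]
  exact HasFDerivAt.fun_sum fun i hi => (hf i hi).hasFDerivAt

lemma hasGradientAt_const_mul [CompleteSpace E] {f : E → ℝ} {f' x : E} (c : ℝ)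
    (hf : HasGradientAt f f' x) : HasGradientAt (fun y => c * f y) (c • f') x := by
  rw [hasGradientAt_iff_hasFDerivAt, map_smul]
  exact hf.hasFDerivAt.const_mul c

lemma measurable_gradient [CompleteSpace E] [MeasurableSpace E] [BorelSpace E] (f : E → ℝ) :
    Measurable (gradient f) :=
  (InnerProductSpace.toDual ℝ E).symm.continuous.measurable.comp (measurable_fderiv ℝ f)

variable [FiniteDimensional ℝ E]

lemma det_pos_of_isPositive {T : E ≃ₗ[ℝ] E} (hT : T.toLinearMap.IsPositive) :
    0 < LinearMap.det T.toLinearMap := by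
  refine lt_of_le_of_ne ?_ T.isUnit_det'.ne_zero.symm
  rw [hT.isSymmetric.det_eq_prod_eigenvalues rfl]
  exact Finset.prod_nonneg fun i _ => hT.nonneg_eigenvalues rfl i

lemma inner_map_self_eq_sum_eigenvalues {T : E →ₗ[ℝ] E} (hT : T.IsSymmetric) {n : ℕ}
    (hn : Module.finrank ℝ E = n) (x : E) :
    ⟪x, T x⟫ = ∑ i, hT.eigenvalues hn i * (hT.eigenvectorBasis hn).repr x i ^ 2 := by
  rw [← (hT.eigenvectorBasis hn).repr.inner_map_map, PiLp.inner_apply]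
  refine Finset.sum_congr rfl fun i _ => ?_
  rw [hT.eigenvectorBasis_apply_self_apply, RCLike.inner_apply, conj_trivial]
  simp only [RCLike.ofReal_real_eq_id, id_eq]
  ring

/-- If some `l i ≤ 0`, the integral diverges and both sides take the junk value `0`. -/
lemma integral_exp_neg_half_sum_mul_sq {ι : Type*} [Fintype ι] (l : ι → ℝ) :
    ∫ y : EuclideanSpace ℝ ι, Real.exp (-(1 / 2) * ∑ i, l i * y i ^ 2) =
      ∏ i, √(2 * π / l i) := by
  calc ∫ y : EuclideanSpace ℝ ι, Real.exp (-(1 / 2) * ∑ i, l i * y i ^ 2)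
      = ∫ y : ι → ℝ, Real.exp (-(1 / 2) * ∑ i, l i * y i ^ 2) :=
        (EuclideanSpace.volume_preserving_symm_measurableEquiv_toLp ι).integral_comp'
          fun y : ι → ℝ => Real.exp (-(1 / 2) * ∑ i, l i * y i ^ 2)
    _ = ∫ y : ι → ℝ, ∏ i, Real.exp (-(l i / 2) * y i ^ 2) := by
        simp only [← Real.exp_sum, Finset.mul_sum]
        ring_nf
    _ = ∏ i, ∫ t : ℝ, Real.exp (-(l i / 2) * t ^ 2) :=
        integral_fintype_prod_volume_eq_prod fun i t => Real.exp (-(l i / 2) * t ^ 2)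
    _ = ∏ i, √(2 * π / l i) := by
        simp only [integral_gaussian, div_div_eq_mul_div, mul_comm π]

/-- For singular `T` the integral diverges and both sides take the junk value `0`. -/
lemma integral_exp_neg_half_inner_map_self [MeasurableSpace E] [BorelSpace E] {T : E →ₗ[ℝ] E}
    (hT : T.IsPositive) :
    ∫ x, Real.exp (-(1 / 2) * ⟪x, T x⟫) =
      √((2 * π) ^ Module.finrank ℝ E / LinearMap.det T) := by
  let b := hT.isSymmetric.eigenvectorBasis rfl
  let l := hT.isSymmetric.eigenvalues rfl
  calc ∫ x, Real.exp (-(1 / 2) * ⟪x, T x⟫)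
      = ∫ x, Real.exp (-(1 / 2) * ∑ i, l i * b.repr x i ^ 2) := by
        simp only [inner_map_self_eq_sum_eigenvalues hT.isSymmetric rfl, l, b]
    _ = ∫ y : EuclideanSpace ℝ (Fin _), Real.exp (-(1 / 2) * ∑ i, l i * y i ^ 2) :=
        b.measurePreserving_repr.integral_comp b.measurableEquiv.measurableEmbedding
          fun y => Real.exp (-(1 / 2) * ∑ i, l i * y i ^ 2)
    _ = ∏ i, √(2 * π / l i) := integral_exp_neg_half_sum_mul_sq l
    _ = √((2 * π) ^ Module.finrank ℝ E / LinearMap.det T) := by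
        have hl : ∀ i, 0 ≤ 2 * π / l i := fun i =>
          div_nonneg Real.two_pi_pos.le (hT.nonneg_eigenvalues rfl i)
        rw [hT.isSymmetric.det_eq_prod_eigenvalues rfl, ← Real.sqrt_prod _ fun i _ => hl i,
          Finset.prod_div_distrib, Finset.prod_const, Finset.card_univ, Fintype.card_fin]
        rfl

end InnerProductSpace

section FisherDivergence

variable {d : ℕ} {p q : EuclideanSpace ℝ (Fin d) → ℝ}

lemma measurable_score : Measurable (score p) :=
  measurable_gradient _

lemma score_eq_of_hasGradientAt {x v : EuclideanSpace ℝ (Fin d)} (hpx : p x ≠ 0)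
    (hp : HasGradientAt p (p x • v) x) : score p x = v := by
  refine HasGradientAt.gradient ?_
  rw [hasGradientAt_iff_hasFDerivAt]
  refine (hp.hasFDerivAt.log hpx).congr_fderiv ?_
  rw [map_smul, inv_smul_smul₀ hpx]

lemma half_mul_sq_le_fisherDiv {c C : ℝ} (hp : ∀ x, 0 ≤ p x) (hp_one : ∫ x, p x = 1) (hc : 0 ≤ c)
    (hlower : ∀ x, c ≤ ‖score p x - score q x‖) (hupper : ∀ x, ‖score p x - score q x‖ ≤ C) :
    1 / 2 * c ^ 2 ≤ fisherDiv p q := by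
  have hp_int : Integrable p := .of_integral_ne_zero (by simp [hp_one])
  have hmeas : Measurable fun x => 1 / 2 * ‖score p x - score q x‖ ^ 2 :=
    ((measurable_score.sub measurable_score).norm.pow_const 2).const_mul _
  have hbound : ∀ x, ‖1 / 2 * ‖score p x - score q x‖ ^ 2‖ ≤ 1 / 2 * C ^ 2 := fun x => by
    rw [Real.norm_of_nonneg (by positivity)]
    gcongr
    exact hupper x
  calc 1 / 2 * c ^ 2 = ∫ x, 1 / 2 * c ^ 2 * p x := by rw [integral_const_mul, hp_one, mul_one]
    _ ≤ fisherDiv p q :=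
      integral_mono (hp_int.const_mul _)
        (hp_int.bdd_mul hmeas.aestronglyMeasurable (.of_forall hbound)) fun x => by
          have hlower_x := hlower x
          have hp_x := hp x
          dsimp only
          gcongr

end FisherDivergence

section Gaussian

variable {d : ℕ} {V : EuclideanSpace ℝ (Fin d) ≃L[ℝ] EuclideanSpace ℝ (Fin d)}

lemma vnorm_eq_norm_symm_apply (hV : V.toLinearMap.IsSymmetric) (θ : EuclideanSpace ℝ (Fin d)) :
    vnorm V θ = ‖V.symm θ‖ := by
  have hsymm : ⟪V.symm θ, V.symm θ⟫ = ⟪θ, V.symm (V.symm θ)⟫ := hV.toLinearMap_symm θ (V.symm θ)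
  rw [vnorm, ← hsymm, real_inner_self_eq_norm_sq, Real.sqrt_sq (norm_nonneg _)]

lemma gaussDensity_pos (hV : V.toLinearMap.IsPositive) (μ x : EuclideanSpace ℝ (Fin d)) :
    0 < gaussDensity V μ x := by
  have := det_pos_of_isPositive hV
  unfold gaussDensity
  positivity

lemma integral_gaussDensity (hV : V.toLinearMap.IsPositive) (μ : EuclideanSpace ℝ (Fin d)) :
    ∫ x, gaussDensity V μ x = 1 := by
  have hdet := det_pos_of_isPositive hV
  have hexp : ∫ x, Real.exp (-(1 / 2) * ⟪x, V.symm x⟫) =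
      √((2 * π) ^ d * LinearMap.det V.toLinearMap) := by
    have := integral_exp_neg_half_inner_map_self hV.toLinearMap_symm
    rwa [LinearEquiv.det_coe_symm, div_inv_eq_mul, finrank_euclideanSpace_fin] at this
  simp only [gaussDensity]
  rw [integral_const_mul, integral_sub_right_eq_self
    (fun x : EuclideanSpace ℝ (Fin d) => Real.exp (-(1 / 2) * ⟪x, V.symm x⟫)) μ, hexp]
  exact inv_mul_cancel₀ (by positivity)

lemma hasGradientAt_gaussDensity (hV : V.toLinearMap.IsSymmetric)
    (μ x : EuclideanSpace ℝ (Fin d)) :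
    HasGradientAt (gaussDensity V μ) (gaussDensity V μ x • V.symm (μ - x)) x := by
  have hquad : HasFDerivAt (fun y => ⟪y - μ, V.symm (y - μ)⟫)
      (2 • innerSL ℝ (V.symm (x - μ))) x := by
    have := (LinearMap.IsSymmetric.hasStrictFDerivAt_reApplyInnerSelf
      (T := (V.symm : EuclideanSpace ℝ (Fin d) →L[ℝ] EuclideanSpace ℝ (Fin d)))
      hV.toLinearMap_symm (x - μ)).hasFDerivAt.comp x ((hasFDerivAt_id x).sub_const μ)
    simpa [Function.comp_def, ContinuousLinearMap.reApplyInnerSelf_apply, real_inner_comm]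
      using this
  rw [hasGradientAt_iff_hasFDerivAt]
  refine ((hquad.const_mul (-(1 / 2))).exp.const_mul _).congr_fderiv ?_
  ext v
  simp only [← neg_sub x μ, map_neg, map_smul, gaussDensity, smul_apply, neg_apply,
    coe_innerSL_apply, InnerProductSpace.toDual_apply_apply, smul_eq_mul, nsmul_eq_mul]
  ring

lemma score_gaussDensity (hV : V.toLinearMap.IsPositive) (μ x : EuclideanSpace ℝ (Fin d)) :
    score (gaussDensity V μ) x = V.symm (μ - x) :=
  score_eq_of_hasGradientAt (gaussDensity_pos hV μ x).ne'
    (hasGradientAt_gaussDensity hV.isSymmetric μ x)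

lemma fisherDiv_gaussDensity (hV : V.toLinearMap.IsPositive) (μ ν : EuclideanSpace ℝ (Fin d)) :
    fisherDiv (gaussDensity V μ) (gaussDensity V ν) = 1 / 2 * vnorm V (ν - μ) ^ 2 := by
  simp only [fisherDiv, score_gaussDensity hV, ← map_sub, sub_sub_sub_cancel_right]
  rw [integral_const_mul, integral_gaussDensity hV, mul_one,
    vnorm_eq_norm_symm_apply hV.isSymmetric, map_sub, map_sub, norm_sub_rev]

end Gaussian

section Mixture

variable {d : ℕ} {ι κ : Type*} [Fintype ι] [Fintype κ]

/-- Density of the finite mixture `∑ i, w i · N(θ i, V)`; with `w` a probability vector, these are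
the points of the convex hull of the Gaussian densities. -/
noncomputable def gaussMixture (V : EuclideanSpace ℝ (Fin d) ≃L[ℝ] EuclideanSpace ℝ (Fin d))
    (w : ι → ℝ) (θ : ι → EuclideanSpace ℝ (Fin d)) (x : EuclideanSpace ℝ (Fin d)) : ℝ :=
  ∑ i, w i * gaussDensity V (θ i) x

/-- The posterior mean `m(x) = E[θ | X = x]` of the component mean `θ`, drawn from the prior `w`,
given an observation `X = x` from `gaussMixture V w θ`. -/
noncomputable def posteriorMean (V : EuclideanSpace ℝ (Fin d) ≃L[ℝ] EuclideanSpace ℝ (Fin d))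
    (w : ι → ℝ) (θ : ι → EuclideanSpace ℝ (Fin d)) (x : EuclideanSpace ℝ (Fin d)) :
    EuclideanSpace ℝ (Fin d) :=
  Finset.univ.centerMass (fun i => w i * gaussDensity V (θ i) x) θ

variable {V : EuclideanSpace ℝ (Fin d) ≃L[ℝ] EuclideanSpace ℝ (Fin d)}
  {w : ι → ℝ} {θ : ι → EuclideanSpace ℝ (Fin d)} {u : κ → ℝ} {η : κ → EuclideanSpace ℝ (Fin d)}

lemma gaussMixture_pos (hV : V.toLinearMap.IsPositive) (hw : ∀ i, 0 ≤ w i) (hw_sum : 0 < ∑ i, w i)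
    (x : EuclideanSpace ℝ (Fin d)) : 0 < gaussMixture V w θ x := by
  obtain ⟨i, -, hi⟩ := Finset.exists_lt_of_sum_lt (by simpa using hw_sum : ∑ _i : ι, (0 : ℝ) < _)
  exact Finset.sum_pos' (fun j _ => mul_nonneg (hw j) (gaussDensity_pos hV _ x).le)
    ⟨i, Finset.mem_univ i, mul_pos hi (gaussDensity_pos hV _ x)⟩

lemma integral_gaussMixture (hV : V.toLinearMap.IsPositive) :
    ∫ x, gaussMixture V w θ x = ∑ i, w i := by
  have hint (μ : EuclideanSpace ℝ (Fin d)) : Integrable (gaussDensity V μ) :=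
    .of_integral_ne_zero (by simp [integral_gaussDensity hV])
  simp only [gaussMixture]
  rw [integral_finsetSum _ fun i _ => (hint (θ i)).const_mul (w i)]
  simp only [integral_const_mul, integral_gaussDensity hV, mul_one]

lemma score_gaussMixture (hV : V.toLinearMap.IsSymmetric) {x : EuclideanSpace ℝ (Fin d)}
    (hx : gaussMixture V w θ x ≠ 0) :
    score (gaussMixture V w θ) x = V.symm (posteriorMean V w θ x - x) := by
  have hmean : gaussMixture V w θ x • posteriorMean V w θ x =
      ∑ i, (w i * gaussDensity V (θ i) x) • θ i := by
    rw [posteriorMean, Finset.centerMass]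
    exact smul_inv_smul₀ hx _
  have hgrad : gaussMixture V w θ x • V.symm (posteriorMean V w θ x - x) =
      ∑ i, w i • gaussDensity V (θ i) x • V.symm (θ i - x) := by
    simp only [← map_smul, ← map_sum, smul_smul, smul_sub, Finset.sum_sub_distrib, hmean,
      ← Finset.sum_smul]
    rfl
  refine score_eq_of_hasGradientAt hx ?_
  rw [hgrad]
  exact hasGradientAt_finset_sum fun i _ =>
    hasGradientAt_const_mul (w i) (hasGradientAt_gaussDensity hV (θ i) x)

lemma norm_score_gaussMixture_sub (hV : V.toLinearMap.IsSymmetric)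
    {x : EuclideanSpace ℝ (Fin d)} (hw : gaussMixture V w θ x ≠ 0) (hu : gaussMixture V u η x ≠ 0) :
    ‖score (gaussMixture V w θ) x - score (gaussMixture V u η) x‖ =
      vnorm V (posteriorMean V u η x - posteriorMean V w θ x) := by
  rw [score_gaussMixture hV hw, score_gaussMixture hV hu, ← map_sub, sub_sub_sub_cancel_right,
    vnorm_eq_norm_symm_apply hV, map_sub, map_sub, norm_sub_rev]

lemma posteriorMean_mem_convexHull_range (hV : V.toLinearMap.IsPositive) (hw : ∀ i, 0 ≤ w i)
    (hw_sum : 0 < ∑ i, w i) (x : EuclideanSpace ℝ (Fin d)) :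
    posteriorMean V w θ x ∈ convexHull ℝ (Set.range θ) :=
  Finset.univ.centerMass_mem_convexHull
    (fun i _ => mul_nonneg (hw i) (gaussDensity_pos hV _ x).le) (gaussMixture_pos hV hw hw_sum x)
    fun i _ => Set.mem_range_self i

lemma exists_vnorm_posteriorMean_sub_le (hV : V.toLinearMap.IsPositive)
    (hw : ∀ i, 0 ≤ w i) (hw_sum : 0 < ∑ i, w i) (hu : ∀ j, 0 ≤ u j) (hu_sum : 0 < ∑ j, u j) :
    ∃ C, ∀ x, vnorm V (posteriorMean V w θ x - posteriorMean V u η x) ≤ C := by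
  have hcompact : IsCompact (convexHull ℝ (Set.range θ) ×ˢ convexHull ℝ (Set.range η)) :=
    ((Set.finite_range θ).isCompact_convexHull ℝ).prod ((Set.finite_range η).isCompact_convexHull ℝ)
  obtain ⟨C, hC⟩ := hcompact.exists_bound_of_continuousOn
    (f := fun z => V.symm (z.1 - z.2)) (by fun_prop)
  refine ⟨C, fun x => ?_⟩
  rw [vnorm_eq_norm_symm_apply hV.isSymmetric]
  exact hC (posteriorMean V w θ x, posteriorMean V u η x)
    ⟨posteriorMean_mem_convexHull_range hV hw hw_sum x,
      posteriorMean_mem_convexHull_range hV hu hu_sum x⟩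

lemma half_mul_sq_le_fisherDiv_gaussMixture (hV : V.toLinearMap.IsPositive)
    (hw : ∀ i, 0 ≤ w i) (hw_sum : ∑ i, w i = 1) (hu : ∀ j, 0 ≤ u j) (hu_sum : 0 < ∑ j, u j)
    {c : ℝ} (hc : 0 ≤ c)
    (hle : ∀ a ∈ convexHull ℝ (Set.range η), ∀ b ∈ convexHull ℝ (Set.range θ),
      c ≤ vnorm V (a - b)) :
    1 / 2 * c ^ 2 ≤ fisherDiv (gaussMixture V w θ) (gaussMixture V u η) := by
  have hw_pos : 0 < ∑ i, w i := hw_sum ▸ zero_lt_one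
  obtain ⟨C, hC⟩ := exists_vnorm_posteriorMean_sub_le (θ := η) (η := θ) hV hu hu_sum hw hw_pos
  have hscore (x : EuclideanSpace ℝ (Fin d)) :=
    norm_score_gaussMixture_sub hV.isSymmetric (gaussMixture_pos (θ := θ) hV hw hw_pos x).ne'
      (gaussMixture_pos (θ := η) hV hu hu_sum x).ne'
  refine half_mul_sq_le_fisherDiv (C := C) (fun x => (gaussMixture_pos hV hw hw_pos x).le)
    (by rw [integral_gaussMixture hV, hw_sum]) hc (fun x => ?_) fun x => ?_
  · rw [hscore]
    exact hle _ (posteriorMean_mem_convexHull_range hV hu hu_sum x) _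
      (posteriorMean_mem_convexHull_range hV hw hw_pos x)
  · rw [hscore]
    exact hC x

lemma exists_eq_gaussMixture_of_mem_convexHull {M : Set (EuclideanSpace ℝ (Fin d))}
    {r : EuclideanSpace ℝ (Fin d) → ℝ}
    (hr : r ∈ convexHull ℝ ((fun θ => gaussDensity V θ) '' M)) :
    ∃ (ι : Type) (_ : Fintype ι) (w : ι → ℝ) (θ : ι → EuclideanSpace ℝ (Fin d)),
      (∀ i, 0 ≤ w i) ∧ ∑ i, w i = 1 ∧ (∀ i, θ i ∈ M) ∧ r = gaussMixture V w θ := by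
  obtain ⟨ι, _, w, g, hw, hw_sum, hg, rfl⟩ := mem_convexHull_iff_exists_fintype.1 hr
  choose θ hθ hgθ using hg
  refine ⟨ι, inferInstance, w, θ, hw, hw_sum, hθ, ?_⟩
  ext x
  simp only [gaussMixture, ← hgθ, Finset.sum_apply, Pi.smul_apply, smul_eq_mul]

end Mixture

theorem gaussian_hulls_least_favorable_general {d : ℕ}
    {V : EuclideanSpace ℝ (Fin d) ≃L[ℝ] EuclideanSpace ℝ (Fin d)} (hV : V.toLinearMap.IsPositive)
    {Minf M1 : Set (EuclideanSpace ℝ (Fin d))} (hconvinf : Convex ℝ Minf) (hconv1 : Convex ℝ M1)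
    {μhatinf μhat1 : EuclideanSpace ℝ (Fin d)} (hμinf : μhatinf ∈ Minf) (hμ1 : μhat1 ∈ M1)
    (hmin : ∀ a ∈ Minf, ∀ b ∈ M1, vnorm V (μhatinf - μhat1) ≤ vnorm V (a - b)) :
    IsLeast (Set.image2 (fun rinf r1 => fisherDiv r1 rinf)
        (convexHull ℝ ((fun θ => gaussDensity V θ) '' Minf))
        (convexHull ℝ ((fun θ => gaussDensity V θ) '' M1)))
      (fisherDiv (gaussDensity V μhat1) (gaussDensity V μhatinf)) ∧
    fisherDiv (gaussDensity V μhat1) (gaussDensity V μhatinf) =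
      1 / 2 * vnorm V (μhatinf - μhat1) ^ 2 := by
  refine ⟨⟨Set.mem_image2_of_mem (subset_convexHull ℝ _ (Set.mem_image_of_mem _ hμinf))
    (subset_convexHull ℝ _ (Set.mem_image_of_mem _ hμ1)), ?_⟩,
    fisherDiv_gaussDensity hV μhat1 μhatinf⟩
  rintro _ ⟨rinf, hrinf, r1, hr1, rfl⟩
  obtain ⟨κ, _, u, η, hu, hu_sum, hη, rfl⟩ := exists_eq_gaussMixture_of_mem_convexHull hrinf
  obtain ⟨ι, _, w, θ, hw, hw_sum, hθ, rfl⟩ := exists_eq_gaussMixture_of_mem_convexHull hr1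
  have hη_hull : convexHull ℝ (Set.range η) ⊆ Minf :=
    convexHull_min (Set.range_subset_iff.2 hη) hconvinf
  have hθ_hull : convexHull ℝ (Set.range θ) ⊆ M1 :=
    convexHull_min (Set.range_subset_iff.2 hθ) hconv1
  rw [fisherDiv_gaussDensity hV]
  exact half_mul_sq_le_fisherDiv_gaussMixture hV hw hw_sum hu (hu_sum ▸ zero_lt_one)
    (Real.sqrt_nonneg _) fun a ha b hb => hmin a (hη_hull ha) b (hθ_hull hb)

/-- If `(μ̂_∞, μ̂_1)` minimizes `‖μ_∞ − μ_1‖_V` over the disjoint, convex, compact sets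
`M_∞ × M_1`, then the pair of Gaussians `(N(μ̂_∞,V), N(μ̂_1,V))` minimizes the Fisher
divergence `D_F(R_1‖R_∞)` over the convex hulls `G_∞ × G_1` of the corresponding
Gaussian families, and the minimum value is `½‖μ̂_∞ − μ̂_1‖²_V`. -/
theorem gaussian_hulls_least_favorable {d : ℕ}
    (V : EuclideanSpace ℝ (Fin d) ≃L[ℝ] EuclideanSpace ℝ (Fin d))
    (hsymm : ∀ x y : EuclideanSpace ℝ (Fin d), ⟪V x, y⟫ = ⟪x, V y⟫)
    (hposdef : ∀ x : EuclideanSpace ℝ (Fin d), x ≠ 0 → 0 < ⟪x, V x⟫)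
    (Minf M1 : Set (EuclideanSpace ℝ (Fin d)))
    (hdisj : Disjoint Minf M1) (hconvinf : Convex ℝ Minf) (hconv1 : Convex ℝ M1)
    (hcompinf : IsCompact Minf) (hcomp1 : IsCompact M1)
    (μhatinf μhat1 : EuclideanSpace ℝ (Fin d))
    (hμinf : μhatinf ∈ Minf) (hμ1 : μhat1 ∈ M1)
    (hmin : ∀ a ∈ Minf, ∀ b ∈ M1, vnorm V (μhatinf - μhat1) ≤ vnorm V (a - b)) :
    (∀ rinf ∈ convexHull ℝ ((fun θ => gaussDensity V θ) '' Minf),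
      ∀ r1 ∈ convexHull ℝ ((fun θ => gaussDensity V θ) '' M1),
        fisherDiv (gaussDensity V μhat1) (gaussDensity V μhatinf) ≤ fisherDiv r1 rinf) ∧
    fisherDiv (gaussDensity V μhat1) (gaussDensity V μhatinf) =
      (1 / 2) * (vnorm V (μhatinf - μhat1)) ^ 2 := by
  obtain ⟨hleast, hvalue⟩ := gaussian_hulls_least_favorable_general
    (isPositive_of_inner_map_pos hsymm hposdef) hconvinf hconv1 hμinf hμ1 hmin
  exact ⟨fun _ hrinf _ hr1 => hleast.2 (Set.mem_image2_of_mem hrinf hr1), hvalue⟩
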